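/- lim_{N→∞} Σ_{n=−N+1}^{N−1} Σ_{m∈ℤ} (−1)^{m+n} / (m² + (3n+1)²) = (2π/9) · log( 2(√3 − 1) ). -/

import Mathlib

open Filter

/-!
By the partial fraction expansion of the cotangent, the sum over `m` is a multiple of the term with
index `k = 3n + 1` of the series `∑ (-1)^k / (k sinh(πk))`. Its terms are even in `k`, so the terms
with `k ≡ 1 mod 3` make up half of the whole series minus its part over multiples of `3`, which is
the same series with `π` replaced by `3π`. Both are Lambert series, equal up to elementary terms to
the logarithms of Weber's function `𝔣` at `i` and at `3i`.

The product formulas for the theta constants, which follow from Jacobi's triple product, give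
`𝔣⁶ = 2θ₃² / (θ₂θ₄)`. At `i` the transformation `τ ↦ -1/τ` gives `θ₂ = θ₄`, and Jacobi's
`θ₃⁴ = θ₂⁴ + θ₄⁴` then determines `θ₃ / θ₄`. At `3i` the same quartic identity and the modular
equation of degree `3` linking `i` and `3i` lead to a quadratic equation for `θ₂θ₄ / θ₃²`.
-/

section QPochhammer

variable {𝕜 : Type*} [NormedField 𝕜]

/-- The infinite `q`-Pochhammer symbol `(a; q)_∞`. It is meaningful for `‖q‖ < 1`, where the product
converges. -/
noncomputable def qPochhammer (a q : 𝕜) : 𝕜 := ∏' n : ℕ, (1 - a * q ^ n)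

lemma norm_pow_lt_one_of_norm_lt_one {q : 𝕜} (hq : ‖q‖ < 1) {n : ℕ} (hn : n ≠ 0) :
    ‖q ^ n‖ < 1 := by
  simpa only [norm_pow] using pow_lt_one₀ (norm_nonneg q) hq hn

lemma pow_ne_one_of_norm_lt_one {q : 𝕜} (hq : ‖q‖ < 1) {n : ℕ} (hn : n ≠ 0) : q ^ n ≠ 1 := by
  intro h
  simpa [h] using norm_pow_lt_one_of_norm_lt_one hq hn

lemma summable_norm_neg_mul_pow (a : 𝕜) {q : 𝕜} (hq : ‖q‖ < 1) :
    Summable fun n : ℕ => ‖-(a * q ^ n)‖ := by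
  simpa only [norm_neg, norm_mul] using (summable_norm_geometric_of_norm_lt_one hq).mul_left ‖a‖

variable [CompleteSpace 𝕜]

lemma multipliable_one_sub_mul_pow (a : 𝕜) {q : 𝕜} (hq : ‖q‖ < 1) :
    Multipliable fun n : ℕ => 1 - a * q ^ n := by
  simpa only [sub_eq_add_neg] using
    multipliable_one_add_of_summable (summable_norm_neg_mul_pow a hq)

lemma qPochhammer_ne_zero {a q : 𝕜} (hq : ‖q‖ < 1) (ha : ∀ n : ℕ, a * q ^ n ≠ 1) :
    qPochhammer a q ≠ 0 := by
  simpa only [qPochhammer, sub_eq_add_neg] using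
    tprod_one_add_ne_zero_of_summable
      (fun n => by simpa only [← sub_eq_add_neg] using sub_ne_zero.2 (ha n).symm)
      (summable_norm_neg_mul_pow a hq)

lemma qPochhammer_self_ne_zero {q : 𝕜} (hq : ‖q‖ < 1) : qPochhammer q q ≠ 0 :=
  qPochhammer_ne_zero hq fun n => by
    simpa only [← pow_succ'] using pow_ne_one_of_norm_lt_one hq n.succ_ne_zero

lemma qPochhammer_eq_one_sub_mul (a : 𝕜) {q : 𝕜} (hq : ‖q‖ < 1) :
    qPochhammer a q = (1 - a) * qPochhammer (a * q) q := by
  have hshift : ∀ n : ℕ, 1 - a * q ^ (n + 1) = 1 - a * q * q ^ n := fun n => by ring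
  have htail : Multipliable fun n : ℕ => 1 - a * q ^ (n + 1) := by
    simpa only [hshift] using multipliable_one_sub_mul_pow (a * q) hq
  rw [qPochhammer, qPochhammer, tprod_eq_zero_mul' (f := fun n => 1 - a * q ^ n) htail, pow_zero,
    mul_one, tprod_congr hshift]

lemma qPochhammer_mul_qPochhammer_neg (a : 𝕜) {q : 𝕜} (hq : ‖q‖ < 1) :
    qPochhammer a q * qPochhammer (-a) q = qPochhammer (a ^ 2) (q ^ 2) := by
  rw [qPochhammer, qPochhammer, ← (multipliable_one_sub_mul_pow a hq).tprod_mul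
    (multipliable_one_sub_mul_pow (-a) hq)]
  exact tprod_congr fun n => by ring

lemma qPochhammer_sq_mul_qPochhammer_mul_sq (a : 𝕜) {q : 𝕜} (hq : ‖q‖ < 1) :
    qPochhammer a (q ^ 2) * qPochhammer (a * q) (q ^ 2) = qPochhammer a q := by
  have hq2 := norm_pow_lt_one_of_norm_lt_one hq two_ne_zero
  have heven : ∀ n : ℕ, 1 - a * (q ^ 2) ^ n = 1 - a * q ^ (2 * n) := fun n => by rw [pow_mul]
  have hodd : ∀ n : ℕ, 1 - a * q * (q ^ 2) ^ n = 1 - a * q ^ (2 * n + 1) := fun n => by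
    rw [← pow_mul]; ring
  have hmeven := multipliable_one_sub_mul_pow a hq2
  have hmodd := multipliable_one_sub_mul_pow (a * q) hq2
  simp only [heven] at hmeven
  simp only [hodd] at hmodd
  simp only [qPochhammer, heven, hodd]
  exact tprod_even_mul_odd (f := fun n => 1 - a * q ^ n) hmeven hmodd

/-- Euler's theorem that partitions into odd parts and into distinct parts are equinumerous. -/
lemma qPochhammer_self_sq_mul_qPochhammer_neg_self {q : 𝕜} (hq : ‖q‖ < 1) :
    qPochhammer q (q ^ 2) * qPochhammer (-q) q = 1 := by
  have hq2 := norm_pow_lt_one_of_norm_lt_one hq two_ne_zero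
  refine mul_right_cancel₀ (qPochhammer_self_ne_zero hq2) ?_
  calc qPochhammer q (q ^ 2) * qPochhammer (-q) q * qPochhammer (q ^ 2) (q ^ 2)
      = qPochhammer q (q ^ 2) * qPochhammer (q * q) (q ^ 2) * qPochhammer (-q) q := by
        rw [← sq q]; ring
    _ = 1 * qPochhammer (q ^ 2) (q ^ 2) := by
        rw [qPochhammer_sq_mul_qPochhammer_mul_sq q hq, qPochhammer_mul_qPochhammer_neg q hq,
          one_mul]

lemma qPochhammer_mul_neg_mul_neg_sq {q : 𝕜} (hq : ‖q‖ < 1) :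
    qPochhammer q (q ^ 2) * qPochhammer (-q) (q ^ 2) * qPochhammer (-q ^ 2) (q ^ 2) = 1 := by
  rw [mul_assoc, show -q ^ 2 = -q * q by ring, qPochhammer_sq_mul_qPochhammer_mul_sq (-q) hq,
    qPochhammer_self_sq_mul_qPochhammer_neg_self hq]

end QPochhammer

section LambertSeries

lemma summable_pow_mul_pow_div {a q : ℝ} (ha : |a| < 1) (hq : |q| < 1) :
    Summable fun x : ℕ × ℕ => (a * q ^ x.1) ^ (x.2 + 1) / ((x.2 : ℝ) + 1) := by
  have hgeom : ∀ {r : ℝ}, |r| < 1 → Summable fun n : ℕ => ‖|r| ^ n‖ := fun hr =>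
    summable_norm_geometric_of_norm_lt_one (by rwa [Real.norm_eq_abs, abs_abs])
  refine .of_norm_bounded (summable_mul_of_summable_norm (hgeom hq) (hgeom ha)) fun ⟨j, i⟩ => ?_
  have hbase : |q| ^ (j * (i + 1)) ≤ |q| ^ j :=
    pow_le_pow_of_le_one (abs_nonneg q) hq.le (Nat.le_mul_of_pos_right j i.succ_pos)
  calc ‖(a * q ^ j) ^ (i + 1) / ((i : ℝ) + 1)‖
      ≤ ‖(a * q ^ j) ^ (i + 1)‖ := by
        rw [norm_div]
        refine div_le_self (norm_nonneg _) ?_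
        rw [Real.norm_of_nonneg (by positivity)]
        exact le_add_of_nonneg_left i.cast_nonneg
    _ = |q| ^ (j * (i + 1)) * |a| ^ (i + 1) := by
        rw [norm_pow, norm_mul, norm_pow, Real.norm_eq_abs, Real.norm_eq_abs, mul_pow, pow_mul,
          mul_comm]
    _ ≤ |q| ^ j * |a| ^ i :=
        mul_le_mul hbase (pow_le_pow_of_le_one (abs_nonneg a) ha.le i.le_succ)
          (by positivity) (by positivity)

lemma abs_mul_pow_lt_one {a q : ℝ} (ha : |a| < 1) (hq : |q| < 1) (n : ℕ) : |a * q ^ n| < 1 := by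
  rw [abs_mul, abs_pow]
  exact mul_lt_one_of_nonneg_of_lt_one_left (abs_nonneg a) ha (pow_le_one₀ (abs_nonneg q) hq.le)

lemma one_sub_mul_pow_pos {a q : ℝ} (ha : |a| < 1) (hq : |q| < 1) (n : ℕ) :
    0 < 1 - a * q ^ n :=
  sub_pos.2 ((le_abs_self _).trans_lt (abs_mul_pow_lt_one ha hq n))

lemma qPochhammer_pos {a q : ℝ} (ha : |a| < 1) (hq : |q| < 1) : 0 < qPochhammer a q :=
  (tprod_nonneg fun n => (one_sub_mul_pow_pos ha hq n).le).lt_of_ne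
    (qPochhammer_ne_zero hq fun n => (sub_pos.1 (one_sub_mul_pow_pos ha hq n)).ne).symm

lemma tsum_log_one_sub_mul_pow {a q : ℝ} (ha : |a| < 1) (hq : |q| < 1) :
    ∑' n : ℕ, Real.log (1 - a * q ^ n) = Real.log (qPochhammer a q) := by
  have hsummable : Summable fun n : ℕ => Real.log (1 - a * q ^ n) := by
    simpa only [sub_eq_add_neg] using
      Real.summable_log_one_add_of_summable (summable_norm_neg_mul_pow a hq).of_norm
  rw [qPochhammer, ← Real.rexp_tsum_eq_tprod (one_sub_mul_pow_pos ha hq) hsummable, Real.log_exp]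

/-- Expand each factor of the product into its logarithm series and sum the resulting double series
over the factors first. -/
lemma hasSum_pow_div_one_sub_pow {a q : ℝ} (ha : |a| < 1) (hq : |q| < 1) :
    HasSum (fun i : ℕ => a ^ (i + 1) / (((i : ℝ) + 1) * (1 - q ^ (i + 1))))
      (-Real.log (qPochhammer a q)) := by
  have hdouble := (summable_pow_mul_pow_div ha hq).hasSum
  have hrow : ∀ j : ℕ, HasSum (fun i : ℕ => (a * q ^ j) ^ (i + 1) / ((i : ℝ) + 1))
      (-Real.log (1 - a * q ^ j)) := fun j =>
    Real.hasSum_pow_div_log_of_abs_lt_one (abs_mul_pow_lt_one ha hq j)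
  have hcolumn : ∀ i : ℕ, HasSum (fun j : ℕ => (a * q ^ j) ^ (i + 1) / ((i : ℝ) + 1))
      (a ^ (i + 1) / (((i : ℝ) + 1) * (1 - q ^ (i + 1)))) := fun i => by
    have hratio : ‖q ^ (i + 1)‖ < 1 := norm_pow_lt_one_of_norm_lt_one hq i.succ_ne_zero
    have hgeom := (hasSum_geometric_of_norm_lt_one hratio).mul_left (a ^ (i + 1) / ((i : ℝ) + 1))
    rw [← div_eq_mul_inv, div_div] at hgeom
    have hterm : ∀ j : ℕ, (a * q ^ j) ^ (i + 1) / ((i : ℝ) + 1) =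
        a ^ (i + 1) / ((i : ℝ) + 1) * (q ^ (i + 1)) ^ j := fun j => by ring
    simpa only [hterm] using hgeom
  have hrows := hdouble.prod_fiberwise hrow
  rw [← tsum_log_one_sub_mul_pow ha hq, ← tsum_neg, hrows.tsum_eq]
  exact ((Equiv.prodComm ℕ ℕ).hasSum_iff.2 hdouble).prod_fiberwise hcolumn

end LambertSeries

section QFactorial

/-- The finite product `(p; p)_N = (1 - p)(1 - p²)⋯(1 - pᴺ)`. -/
def qFactorial {K : Type*} [Field K] (p : K) (N : ℕ) : K :=
  ∏ n ∈ Finset.range N, (1 - p ^ (n + 1))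

/-- The reciprocal of `qFactorial p n`, extended by `0` to negative `n`. With this convention the
`q`-binomial coefficients vanish outside the usual range and their recurrences hold on all of
`ℤ`. -/
def invQFactorial {K : Type*} [Field K] (p : K) (n : ℤ) : K :=
  if 0 ≤ n then (qFactorial p n.toNat)⁻¹ else 0

section Field

variable {K : Type*} [Field K] {p : K}

lemma qFactorial_succ (p : K) (N : ℕ) :
    qFactorial p (N + 1) = qFactorial p N * (1 - p ^ (N + 1)) :=
  Finset.prod_range_succ _ _

lemma invQFactorial_natCast (p : K) (n : ℕ) : invQFactorial p n = (qFactorial p n)⁻¹ := by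
  simp [invQFactorial]

lemma invQFactorial_of_neg (p : K) {n : ℤ} (hn : n < 0) : invQFactorial p n = 0 :=
  if_neg hn.not_ge

lemma invQFactorial_eq_mul_invQFactorial_add_one (hp : ∀ n : ℕ, p ^ (n + 1) ≠ 1) (n : ℤ) :
    invQFactorial p n = (1 - p ^ (n + 1)) * invQFactorial p (n + 1) := by
  rcases lt_trichotomy n (-1) with hn | rfl | hn
  · rw [invQFactorial_of_neg p (by lia), invQFactorial_of_neg p (by lia), mul_zero]
  · simp [invQFactorial_of_neg]
  · lift n to ℕ using by lia
    have hfactor : 1 - p ^ (n + 1) ≠ 0 := sub_ne_zero.2 (hp n).symm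
    rw [← Nat.cast_succ, invQFactorial_natCast, invQFactorial_natCast, zpow_natCast,
      qFactorial_succ, mul_inv_rev, mul_inv_cancel_left₀ hfactor]

end Field

variable {𝕜 : Type*} [NormedField 𝕜] [CompleteSpace 𝕜] {p : 𝕜}

lemma tendsto_qFactorial (hp : ‖p‖ < 1) :
    Tendsto (qFactorial p) atTop (nhds (qPochhammer p p)) := by
  simpa only [qPochhammer, ← pow_succ'] using!
    (multipliable_one_sub_mul_pow p hp).tendsto_prod_tprod_nat

lemma tendsto_inv_qFactorial (hp : ‖p‖ < 1) :
    Tendsto (fun n => (qFactorial p n)⁻¹) atTop (nhds (qPochhammer p p)⁻¹) :=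
  (tendsto_qFactorial hp).inv₀ (qPochhammer_self_ne_zero hp)

lemma tendsto_invQFactorial (hp : ‖p‖ < 1) :
    Tendsto (invQFactorial p) atTop (nhds (qPochhammer p p)⁻¹) := by
  rw [← Nat.map_cast_int_atTop, tendsto_map'_iff]
  simpa only [Function.comp_def, invQFactorial_natCast] using tendsto_inv_qFactorial hp

lemma exists_norm_qFactorial_le (hp : ‖p‖ < 1) : ∃ C : ℝ, ∀ n, ‖qFactorial p n‖ ≤ C := by
  obtain ⟨C, hC⟩ := (tendsto_qFactorial hp).norm.bddAbove_range
  exact ⟨C, fun n => hC ⟨n, rfl⟩⟩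

lemma exists_norm_invQFactorial_le (hp : ‖p‖ < 1) : ∃ C : ℝ, ∀ n, ‖invQFactorial p n‖ ≤ C := by
  obtain ⟨C, hC⟩ := (tendsto_inv_qFactorial hp).norm.bddAbove_range
  have hnat : ∀ n : ℕ, ‖invQFactorial p n‖ ≤ C := fun n => by
    simpa only [invQFactorial_natCast] using hC ⟨n, rfl⟩
  refine ⟨C, fun n => ?_⟩
  rcases lt_or_ge n 0 with hn | hn
  · simpa only [invQFactorial_of_neg p hn, norm_zero] using (norm_nonneg _).trans (hnat 0)
  · lift n to ℕ using hn
    exact hnat n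

end QFactorial

section TripleProduct

lemma zpow_sq_sub_one_mul_shift {K : Type*} [Field K] {q z : K} (hq : q ≠ 0) (hz : z ≠ 0) (N : ℕ)
    (k : ℤ) :
    z ^ (k - 1) * q ^ ((k - 1) ^ 2) * (z * q ^ (2 * N + 1)) =
      z ^ k * q ^ (k ^ 2) * (q ^ 2) ^ (N - k + 1 : ℤ) := by
  have hexp : q ^ ((k - 1) ^ 2) * q ^ (2 * N + 1) = q ^ (k ^ 2) * (q ^ 2) ^ (N - k + 1 : ℤ) := by
    rw [← zpow_natCast q 2, ← zpow_natCast q (2 * N + 1), ← zpow_mul, ← zpow_add₀ hq,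
      ← zpow_add₀ hq]
    congr 1
    push_cast
    ring
  rw [zpow_sub_one₀ hz]
  linear_combination (z ^ k * z⁻¹ * z) * hexp +
    (z ^ k * q ^ (k ^ 2) * (q ^ 2) ^ (N - k + 1 : ℤ)) * inv_mul_cancel₀ hz

/-- The summand of the finite form of the Jacobi triple product: the `q²`-binomial
coefficient `[2N, N + k]` times `zᵏ q^(k²)`. -/
def tripleProductTerm {K : Type*} [Field K] (q z : K) (N : ℕ) (k : ℤ) : K :=
  qFactorial (q ^ 2) (2 * N) * invQFactorial (q ^ 2) (N - k) * invQFactorial (q ^ 2) (N + k) *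
    (z ^ k * q ^ (k ^ 2))

lemma tripleProductTerm_succ {K : Type*} [Field K] {q z : K} (hq : q ≠ 0) (hz : z ≠ 0)
    (hp : ∀ n : ℕ, (q ^ 2) ^ (n + 1) ≠ 1) (N : ℕ) (k : ℤ) :
    tripleProductTerm q z (N + 1) k =
      tripleProductTerm q z N k * (1 + q ^ (4 * N + 2)) +
        tripleProductTerm q z N (k - 1) * (z * q ^ (2 * N + 1)) +
        tripleProductTerm q z N (k + 1) * (z⁻¹ * q ^ (2 * N + 1)) := by
  have hp0 : q ^ 2 ≠ 0 := pow_ne_zero 2 hq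
  have hdown := zpow_sq_sub_one_mul_shift hq hz N k
  have hup : z ^ (k + 1) * q ^ ((k + 1) ^ 2) * (z⁻¹ * q ^ (2 * N + 1)) =
      z ^ k * q ^ (k ^ 2) * (q ^ 2) ^ (N + k + 1 : ℤ) := by
    have h := zpow_sq_sub_one_mul_shift hq (inv_ne_zero hz) N (-k)
    rwa [← neg_add', inv_zpow', inv_zpow', neg_neg, neg_neg, neg_sq, neg_sq, sub_neg_eq_add] at h
  have hXY : q ^ (4 * N + 2) = q ^ 2 * ((q ^ 2) ^ (N - k : ℤ) * (q ^ 2) ^ (N + k : ℤ)) := by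
    rw [← zpow_add₀ hp0, show (N - k + (N + k) : ℤ) = (2 * N : ℕ) by push_cast; ring, zpow_natCast]
    ring
  have hfact : qFactorial (q ^ 2) (2 * (N + 1)) = qFactorial (q ^ 2) (2 * N) *
      (1 - q ^ (4 * N + 2)) * (1 - q ^ 2 * q ^ (4 * N + 2)) := by
    rw [show 2 * (N + 1) = 2 * N + 1 + 1 by ring, qFactorial_succ, qFactorial_succ]
    ring
  have hrec := invQFactorial_eq_mul_invQFactorial_add_one hp
  have hsub := hrec (N - (k + 1))
  have hadd := hrec (N + (k - 1))
  rw [show (N - (k + 1) + 1 : ℤ) = N - k by ring] at hsub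
  rw [show (N + (k - 1) + 1 : ℤ) = N + k by ring] at hadd
  simp only [tripleProductTerm, Nat.cast_succ, mul_assoc _ (z ^ (_ : ℤ) * q ^ (_ : ℤ)), hdown, hup,
    show (N + 1 - k : ℤ) = N - k + 1 by ring, show (N + 1 + k : ℤ) = N + k + 1 by ring,
    show (N - (k - 1) : ℤ) = N - k + 1 by ring, show (N + (k + 1) : ℤ) = N + k + 1 by ring]
  rw [hfact, hsub, hadd, hrec (N - k), hrec (N + k), hXY, zpow_add_one₀ hp0, zpow_add_one₀ hp0]
  ring

lemma hasSum_tripleProductTerm {𝕜 : Type*} [NormedField 𝕜] {q z : 𝕜} (hq : q ≠ 0) (hz : z ≠ 0)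
    (hp : ∀ n : ℕ, (q ^ 2) ^ (n + 1) ≠ 1) (N : ℕ) :
    HasSum (tripleProductTerm q z N)
      (∏ j ∈ Finset.range N, (1 + z * q ^ (2 * j + 1)) * (1 + z⁻¹ * q ^ (2 * j + 1))) := by
  induction N with
  | zero =>
    have hsupp : ∀ k : ℤ, k ≠ 0 → tripleProductTerm q z 0 k = 0 := fun k hk => by
      rcases lt_or_gt_of_ne hk with hk | hk
      · simp [tripleProductTerm, invQFactorial_of_neg _ hk]
      · simp [tripleProductTerm, invQFactorial_of_neg _ (neg_lt_zero.2 hk)]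
    simpa [tripleProductTerm, invQFactorial, qFactorial] using hasSum_single 0 hsupp
  | succ N ih =>
    have hstay := ih.mul_right (1 + q ^ (4 * N + 2))
    have hdown := ((Equiv.subRight (1 : ℤ)).hasSum_iff.2 ih).mul_right (z * q ^ (2 * N + 1))
    have hup := ((Equiv.addRight (1 : ℤ)).hasSum_iff.2 ih).mul_right (z⁻¹ * q ^ (2 * N + 1))
    have hfactor : (1 + z * q ^ (2 * N + 1)) * (1 + z⁻¹ * q ^ (2 * N + 1)) =
        1 + q ^ (4 * N + 2) + z * q ^ (2 * N + 1) + z⁻¹ * q ^ (2 * N + 1) := by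
      linear_combination q ^ (4 * N + 2) * mul_inv_cancel₀ hz
    rw [Finset.prod_range_succ, hfactor, mul_add, mul_add]
    exact ((hstay.add hdown).add hup).congr_fun fun k => tripleProductTerm_succ hq hz hp N k

variable {𝕜 : Type*} [NormedField 𝕜] {q z : 𝕜}

lemma summable_norm_zpow_mul_zpow_sq (hq0 : q ≠ 0) (hq : ‖q‖ < 1) (hz : z ≠ 0) :
    Summable fun k : ℤ => ‖z ^ k * q ^ (k ^ 2)‖ := by
  have hτ : 0 < -Real.log ‖q‖ / Real.pi :=
    div_pos (neg_pos.2 (Real.log_neg (norm_pos_iff.2 hq0) hq)) Real.pi_pos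
  have hsum := (summable_jacobiTheta₂_term_iff ((-Real.log ‖z‖ / (2 * Real.pi) : ℝ) * Complex.I)
    ((-Real.log ‖q‖ / Real.pi : ℝ) * Complex.I)).2 (by simpa using hτ)
  refine hsum.norm.congr fun k => ?_
  rw [norm_jacobiTheta₂_term, norm_mul, norm_zpow, norm_zpow, ← Real.rpow_intCast,
    ← Real.rpow_intCast, Real.rpow_def_of_pos (norm_pos_iff.2 hz),
    Real.rpow_def_of_pos (norm_pos_iff.2 hq0), ← Real.exp_add, Complex.im_ofReal_mul,
    Complex.im_ofReal_mul, Complex.I_im]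
  have := Real.pi_ne_zero
  push_cast
  field_simp
  ring_nf

variable [CompleteSpace 𝕜]

lemma tendsto_tripleProductTerm (hq : ‖q‖ < 1) (k : ℤ) :
    Tendsto (fun N : ℕ => tripleProductTerm q z N k) atTop
      (nhds ((qPochhammer (q ^ 2) (q ^ 2))⁻¹ * (z ^ k * q ^ (k ^ 2)))) := by
  have hq2 := norm_pow_lt_one_of_norm_lt_one hq two_ne_zero
  have hdouble : Tendsto (fun N : ℕ => 2 * N) atTop atTop := tendsto_id.const_mul_atTop' two_pos
  have hcast : Tendsto ((↑) : ℕ → ℤ) atTop atTop := tendsto_natCast_atTop_atTop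
  have hlim := ((((tendsto_qFactorial hq2).comp hdouble).mul
    ((tendsto_invQFactorial hq2).comp (tendsto_atTop_add_const_right _ (-k) hcast))).mul
    ((tendsto_invQFactorial hq2).comp (tendsto_atTop_add_const_right _ k hcast))).mul_const
    (z ^ k * q ^ (k ^ 2))
  rwa [mul_inv_cancel₀ (qPochhammer_self_ne_zero hq2), one_mul] at hlim

lemma exists_norm_tripleProductTerm_le (hq : ‖q‖ < 1) :
    ∃ C : ℝ, ∀ N k, ‖tripleProductTerm q z N k‖ ≤ C * ‖z ^ k * q ^ (k ^ 2)‖ := by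
  have hq2 := norm_pow_lt_one_of_norm_lt_one hq two_ne_zero
  obtain ⟨A, hA⟩ := exists_norm_qFactorial_le hq2
  obtain ⟨B, hB⟩ := exists_norm_invQFactorial_le hq2
  have hA0 : 0 ≤ A := (norm_nonneg _).trans (hA 0)
  have hB0 : 0 ≤ B := (norm_nonneg _).trans (hB 0)
  refine ⟨A * B * B, fun N k => ?_⟩
  rw [tripleProductTerm, norm_mul, norm_mul, norm_mul]
  gcongr
  exacts [hA _, hB _, hB _]

/-- **Jacobi's triple product identity.** -/
theorem tsum_zpow_mul_zpow_sq (hq0 : q ≠ 0) (hq : ‖q‖ < 1) (hz : z ≠ 0) :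
    ∑' k : ℤ, z ^ k * q ^ (k ^ 2) = qPochhammer (q ^ 2) (q ^ 2) *
      (qPochhammer (-(z * q)) (q ^ 2) * qPochhammer (-(z⁻¹ * q)) (q ^ 2)) := by
  have hq2 := norm_pow_lt_one_of_norm_lt_one hq two_ne_zero
  obtain ⟨C, hC⟩ := exists_norm_tripleProductTerm_le (z := z) hq
  have hsum := tendsto_tsum_of_dominated_convergence
    ((summable_norm_zpow_mul_zpow_sq hq0 hq hz).mul_left C) (tendsto_tripleProductTerm hq)
    (Eventually.of_forall hC)
  have hprod := ((multipliable_one_sub_mul_pow (-(z * q)) hq2).tendsto_prod_tprod_nat.mul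
    (multipliable_one_sub_mul_pow (-(z⁻¹ * q)) hq2).tendsto_prod_tprod_nat)
  have hp : ∀ n : ℕ, (q ^ 2) ^ (n + 1) ≠ 1 := fun n =>
    pow_ne_one_of_norm_lt_one hq2 n.succ_ne_zero
  have hfactor : ∀ w : 𝕜, ∀ j : ℕ, 1 - -(w * q) * (q ^ 2) ^ j = 1 + w * q ^ (2 * j + 1) :=
    fun w j => by ring
  simp only [hfactor, ← Finset.prod_mul_distrib, ← (hasSum_tripleProductTerm hq0 hz hp _).tsum_eq]
    at hprod
  rw [tsum_mul_left] at hsum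
  rw [eq_comm, ← eq_inv_mul_iff_mul_eq₀ (qPochhammer_self_ne_zero hq2)]
  simpa only [qPochhammer, hfactor] using tendsto_nhds_unique hprod hsum

end TripleProduct

section Theta

variable {𝕜 : Type*} [NormedField 𝕜] {q : 𝕜}

/-- The theta series `∑ q^(k²)`, that is `θ₃` as a function of the nome; `θ₄(q)` is
`squareTheta (-q)`. -/
noncomputable def squareTheta (q : 𝕜) : 𝕜 := ∑' k : ℤ, q ^ (k ^ 2)

/-- The theta series `∑ q^(k(k+1))`, that is `q^(-1/4) θ₂(q)` as a function of the nome. -/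
noncomputable def pronicTheta (q : 𝕜) : 𝕜 := ∑' k : ℤ, q ^ (k ^ 2 + k)

lemma summable_norm_zpow_sq (hq0 : q ≠ 0) (hq : ‖q‖ < 1) :
    Summable fun k : ℤ => ‖q ^ (k ^ 2)‖ := by
  simpa only [one_zpow, one_mul] using summable_norm_zpow_mul_zpow_sq hq0 hq one_ne_zero

lemma zpow_mul_zpow_sq (hq0 : q ≠ 0) (k : ℤ) : q ^ k * q ^ (k ^ 2) = q ^ (k ^ 2 + k) := by
  rw [← zpow_add₀ hq0, add_comm]

lemma summable_norm_zpow_sq_add_self (hq0 : q ≠ 0) (hq : ‖q‖ < 1) :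
    Summable fun k : ℤ => ‖q ^ (k ^ 2 + k)‖ := by
  simpa only [zpow_mul_zpow_sq hq0] using summable_norm_zpow_mul_zpow_sq hq0 hq hq0

variable [CompleteSpace 𝕜]

lemma squareTheta_eq_qPochhammer (hq0 : q ≠ 0) (hq : ‖q‖ < 1) :
    squareTheta q = qPochhammer (q ^ 2) (q ^ 2) * qPochhammer (-q) (q ^ 2) ^ 2 := by
  simpa only [squareTheta, one_zpow, inv_one, one_mul, ← sq] using
    tsum_zpow_mul_zpow_sq hq0 hq one_ne_zero

lemma pronicTheta_eq_qPochhammer (hq0 : q ≠ 0) (hq : ‖q‖ < 1) :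
    pronicTheta q = 2 * (qPochhammer (q ^ 2) (q ^ 2) * qPochhammer (-q ^ 2) (q ^ 2) ^ 2) := by
  have htriple := tsum_zpow_mul_zpow_sq hq0 hq hq0
  simp only [zpow_mul_zpow_sq hq0, inv_mul_cancel₀ hq0, ← sq] at htriple
  rw [pronicTheta, htriple,
    qPochhammer_eq_one_sub_mul (-1) (norm_pow_lt_one_of_norm_lt_one hq two_ne_zero), neg_one_mul]
  ring

lemma qPochhammer_pow_six_mul_squareTheta_neg_mul_pronicTheta (hq0 : q ≠ 0) (hq : ‖q‖ < 1) :
    qPochhammer (-q) (q ^ 2) ^ 6 * (squareTheta (-q) * pronicTheta q) = 2 * squareTheta q ^ 2 := by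
  rw [squareTheta_eq_qPochhammer (neg_ne_zero.2 hq0) (by rwa [norm_neg]),
    squareTheta_eq_qPochhammer hq0 hq, pronicTheta_eq_qPochhammer hq0 hq, neg_sq, neg_neg]
  have hone := congrArg (· ^ 2) (qPochhammer_mul_neg_mul_neg_sq hq)
  simp only [one_pow] at hone
  linear_combination
    2 * qPochhammer (q ^ 2) (q ^ 2) ^ 2 * qPochhammer (-q) (q ^ 2) ^ 4 * hone

lemma squareTheta_mul_squareTheta_neg (hq0 : q ≠ 0) (hq : ‖q‖ < 1) :
    squareTheta q * squareTheta (-q) = squareTheta (-q ^ 2) ^ 2 := by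
  have hq2 := norm_pow_lt_one_of_norm_lt_one hq two_ne_zero
  have hsplit := qPochhammer_sq_mul_qPochhammer_mul_sq (q ^ 2) hq2
  rw [← sq] at hsplit
  have hneg := qPochhammer_mul_qPochhammer_neg q hq2
  rw [squareTheta_eq_qPochhammer (neg_ne_zero.2 hq0) (by rwa [norm_neg]),
    squareTheta_eq_qPochhammer hq0 hq,
    squareTheta_eq_qPochhammer (neg_ne_zero.2 (pow_ne_zero 2 hq0)) (by rwa [norm_neg]),
    neg_sq, neg_sq, neg_neg, neg_neg, ← hsplit, ← hneg]
  ring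

end Theta

section Parity

lemma bijective_sumElim_add_sub : Function.Bijective (Sum.elim
    (fun x : ℤ × ℤ => (x.1 + x.2, x.1 - x.2)) fun x : ℤ × ℤ => (x.1 + x.2 + 1, x.1 - x.2)) := by
  constructor
  · rintro (⟨a, b⟩ | ⟨a, b⟩) (⟨c, d⟩ | ⟨c, d⟩) h <;>
      simp only [Sum.elim_inl, Sum.elim_inr, Prod.mk.injEq, Sum.inl.injEq, Sum.inr.injEq,
        reduceCtorEq] at h ⊢ <;> lia
  · rintro ⟨m, n⟩
    rcases Int.even_or_odd' (m + n) with ⟨k, hk | hk⟩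
    · exact ⟨Sum.inl (k, m - k), Prod.ext (by simp) (by simp only [Sum.elim_inl]; lia)⟩
    · exact ⟨Sum.inr (k, m - 1 - k), Prod.ext (by simp) (by simp only [Sum.elim_inr]; lia)⟩

lemma tsum_int_prod_eq_tsum_add_sub {E : Type*} [NormedAddCommGroup E] [CompleteSpace E]
    {F : ℤ × ℤ → E} (hF : Summable F) :
    ∑' x, F x = ∑' x : ℤ × ℤ, F (x.1 + x.2, x.1 - x.2) +
      ∑' x : ℤ × ℤ, F (x.1 + x.2 + 1, x.1 - x.2) := by
  have he := bijective_sumElim_add_sub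
  rw [← (Equiv.ofBijective _ he).tsum_eq F]
  exact Summable.tsum_sum (hF.comp_injective (he.1.comp Sum.inl_injective))
    (hF.comp_injective (he.1.comp Sum.inr_injective))

lemma tsum_mul_tsum_eq_tsum_add_sub {R : Type*} [NormedRing R] [CompleteSpace R] {f g : ℤ → R}
    (hf : Summable fun k => ‖f k‖) (hg : Summable fun k => ‖g k‖) :
    (∑' k, f k) * ∑' k, g k = ∑' x : ℤ × ℤ, f (x.1 + x.2) * g (x.1 - x.2) +
      ∑' x : ℤ × ℤ, f (x.1 + x.2 + 1) * g (x.1 - x.2) := by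
  rw [tsum_mul_tsum_of_summable_norm hf hg]
  exact tsum_int_prod_eq_tsum_add_sub (F := fun x => f x.1 * g x.2)
    (summable_mul_of_summable_norm hf hg)

end Parity

section ThetaIdentities

variable {𝕜 : Type*} [NormedField 𝕜]

/-- The even part in `q` of `θ₃(q) θ₃(q³)`. -/
noncomputable def evenHexagonalTheta (q : 𝕜) : 𝕜 :=
  ∑' x : ℤ × ℤ, q ^ (4 * (x.1 ^ 2 - x.1 * x.2 + x.2 ^ 2))

/-- The odd part in `q` of `θ₃(q) θ₃(q³)`. -/
noncomputable def oddHexagonalTheta (q : 𝕜) : 𝕜 :=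
  ∑' x : ℤ × ℤ, q ^ (4 * (x.1 ^ 2 - x.1 * x.2 + x.2 ^ 2) + 2 * (x.1 + x.2) + 1)

lemma evenHexagonalTheta_neg (q : 𝕜) : evenHexagonalTheta (-q) = evenHexagonalTheta q :=
  tsum_congr fun x => Even.neg_zpow (((by decide : Even (4 : ℤ)).mul_right _)) q

lemma oddHexagonalTheta_neg (q : 𝕜) : oddHexagonalTheta (-q) = -oddHexagonalTheta q := by
  rw [oddHexagonalTheta, oddHexagonalTheta, ← tsum_neg]
  refine tsum_congr fun x => Odd.neg_zpow ?_ q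
  exact (((by decide : Even (4 : ℤ)).mul_right _).add (even_two.mul_right _)).add_one

variable [CompleteSpace 𝕜] {q : 𝕜}

lemma squareTheta_sq (hq0 : q ≠ 0) (hq : ‖q‖ < 1) :
    squareTheta q ^ 2 = squareTheta (q ^ 2) ^ 2 + q * pronicTheta (q ^ 2) ^ 2 := by
  have hq2 := norm_pow_lt_one_of_norm_lt_one hq two_ne_zero
  have hq20 : q ^ 2 ≠ 0 := pow_ne_zero 2 hq0
  have hsq := summable_norm_zpow_sq hq0 hq
  have hsq2 := summable_norm_zpow_sq hq20 hq2
  have hpronic2 := summable_norm_zpow_sq_add_self hq20 hq2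
  have hpow : ∀ k : ℤ, (q ^ 2) ^ k = q ^ (2 * k) := fun k => by rw [zpow_mul, zpow_ofNat]
  rw [sq (squareTheta q), sq (squareTheta (q ^ 2)), sq (pronicTheta (q ^ 2)), squareTheta,
    squareTheta, pronicTheta, tsum_mul_tsum_eq_tsum_add_sub hsq hsq,
    tsum_mul_tsum_of_summable_norm hsq2 hsq2, tsum_mul_tsum_of_summable_norm hpronic2 hpronic2,
    ← tsum_mul_left]
  congr 1 <;> refine tsum_congr fun x => ?_ <;>
    · simp only [hpow, ← zpow_add₀ hq0, ← zpow_one_add₀ hq0]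
      ring_nf

/-- Jacobi's `θ₃⁴ = θ₄⁴ + θ₂⁴` at the nome `q²`. -/
theorem squareTheta_sq_pow_four (hq0 : q ≠ 0) (hq : ‖q‖ < 1) :
    squareTheta (q ^ 2) ^ 4 = squareTheta (-q ^ 2) ^ 4 + q ^ 2 * pronicTheta (q ^ 2) ^ 4 := by
  have hpos := squareTheta_sq hq0 hq
  have hneg := squareTheta_sq (neg_ne_zero.2 hq0) (by rwa [norm_neg])
  rw [neg_sq] at hneg
  have hprod := squareTheta_mul_squareTheta_neg hq0 hq
  linear_combination
    (-squareTheta (-q) ^ 2) * hpos -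
      (squareTheta (q ^ 2) ^ 2 + q * pronicTheta (q ^ 2) ^ 2) * hneg +
      (squareTheta q * squareTheta (-q) + squareTheta (-q ^ 2) ^ 2) * hprod

lemma squareTheta_mul_squareTheta_cube (hq0 : q ≠ 0) (hq : ‖q‖ < 1) :
    squareTheta q * squareTheta (q ^ 3) = evenHexagonalTheta q + oddHexagonalTheta q := by
  have hq3 := norm_pow_lt_one_of_norm_lt_one hq three_ne_zero
  have hsq := summable_norm_zpow_sq hq0 hq
  have hsq3 := summable_norm_zpow_sq (pow_ne_zero 3 hq0) hq3
  have hpow : ∀ k : ℤ, (q ^ 3) ^ k = q ^ (3 * k) := fun k => by rw [zpow_mul, zpow_ofNat]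
  rw [squareTheta, squareTheta, tsum_mul_tsum_eq_tsum_add_sub hsq hsq3, evenHexagonalTheta,
    oddHexagonalTheta]
  congr 1 <;> refine tsum_congr fun x => ?_ <;>
    · simp only [hpow, ← zpow_add₀ hq0]
      ring_nf

lemma mul_pronicTheta_mul_pronicTheta_cube (hq0 : q ≠ 0) (hq : ‖q‖ < 1) :
    q * (pronicTheta q * pronicTheta (q ^ 3)) = 2 * oddHexagonalTheta q := by
  have hq3 := norm_pow_lt_one_of_norm_lt_one hq three_ne_zero
  have hpronic := summable_norm_zpow_sq_add_self hq0 hq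
  have hpronic3 := summable_norm_zpow_sq_add_self (pow_ne_zero 3 hq0) hq3
  have hpow : ∀ k : ℤ, (q ^ 3) ^ k = q ^ (3 * k) := fun k => by rw [zpow_mul, zpow_ofNat]
  let reflect : ℤ × ℤ ≃ ℤ × ℤ := ⟨fun x => (x.1, x.1 - x.2), fun x => (x.1, x.1 - x.2),
    fun x => by simp, fun x => by simp⟩
  let rotate : ℤ × ℤ ≃ ℤ × ℤ := ⟨fun x => (x.1 - x.2 - 1, x.1), fun x => (x.2, x.2 - x.1 - 1),
    fun x => Prod.ext rfl (by simp only; ring), fun x => Prod.ext (by simp only; ring) rfl⟩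
  rw [pronicTheta, pronicTheta, tsum_mul_tsum_eq_tsum_add_sub hpronic hpronic3, mul_add,
    two_mul]
  congr 1
  · rw [← reflect.tsum_eq, ← tsum_mul_left]
    refine tsum_congr fun x => ?_
    simp only [reflect, Equiv.coe_fn_mk, hpow, ← zpow_add₀ hq0, ← zpow_one_add₀ hq0]
    ring_nf
  · rw [← rotate.tsum_eq, ← tsum_mul_left]
    refine tsum_congr fun x => ?_
    simp only [rotate, Equiv.coe_fn_mk, hpow, ← zpow_add₀ hq0, ← zpow_one_add₀ hq0]
    ring_nf

/-- The modular equation of degree three. -/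
theorem squareTheta_mul_squareTheta_cube_eq_add (hq0 : q ≠ 0) (hq : ‖q‖ < 1) :
    squareTheta q * squareTheta (q ^ 3) =
      squareTheta (-q) * squareTheta (-q ^ 3) + q * (pronicTheta q * pronicTheta (q ^ 3)) := by
  rw [← Odd.neg_pow (by decide), squareTheta_mul_squareTheta_cube hq0 hq,
    squareTheta_mul_squareTheta_cube (neg_ne_zero.2 hq0) (by rwa [norm_neg]),
    evenHexagonalTheta_neg, oddHexagonalTheta_neg, mul_pronicTheta_mul_pronicTheta_cube hq0 hq]
  ring

end ThetaIdentities

section ThetaConstants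

/-- The nome `exp(πiτ)` of the purely imaginary modulus `τ = iy`. -/
noncomputable def nome (y : ℝ) : ℝ := Real.exp (-(Real.pi * y))

/-- Jacobi's theta constant `θ₂(0 | iy)`. -/
noncomputable def thetaTwo (y : ℝ) : ℝ := Real.exp (-(Real.pi * y / 4)) * pronicTheta (nome y)

/-- Jacobi's theta constant `θ₃(0 | iy)`. -/
noncomputable def thetaThree (y : ℝ) : ℝ := squareTheta (nome y)

/-- Jacobi's theta constant `θ₄(0 | iy)`. -/
noncomputable def thetaFour (y : ℝ) : ℝ := squareTheta (-nome y)

/-- Weber's function `𝔣(iy) = q^(-1/24) ∏ (1 + q^(2n+1))`, where `q = nome y`. -/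
noncomputable def weberF (y : ℝ) : ℝ :=
  Real.exp (Real.pi * y / 24) * qPochhammer (-nome y) (nome y ^ 2)

lemma nome_pos (y : ℝ) : 0 < nome y := Real.exp_pos _

lemma nome_lt_one {y : ℝ} (hy : 0 < y) : nome y < 1 :=
  Real.exp_lt_one_iff.2 (neg_neg_of_pos (mul_pos Real.pi_pos hy))

lemma norm_nome_lt_one {y : ℝ} (hy : 0 < y) : ‖nome y‖ < 1 := by
  rw [Real.norm_of_nonneg (nome_pos y).le]
  exact nome_lt_one hy

lemma nome_natCast_mul (n : ℕ) (y : ℝ) : nome (n * y) = nome y ^ n := by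
  rw [nome, nome, ← Real.exp_nat_mul]
  ring_nf

variable {y : ℝ}

lemma thetaThree_pow_four (hy : 0 < y) :
    thetaThree y ^ 4 = thetaFour y ^ 4 + thetaTwo y ^ 4 := by
  have hnome : nome (y / 2) ^ 2 = nome y := by
    rw [← nome_natCast_mul, Nat.cast_two, mul_div_cancel₀ y two_ne_zero]
  have hprefactor : Real.exp (-(Real.pi * y / 4)) ^ 4 = nome y := by
    rw [← Real.exp_nat_mul, nome]
    ring_nf
  have hjacobi := squareTheta_sq_pow_four (nome_pos (y / 2)).ne' (norm_nome_lt_one (half_pos hy))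
  rw [thetaThree, thetaFour, thetaTwo, mul_pow, hprefactor]
  rwa [hnome] at hjacobi

lemma thetaThree_mul_thetaThree_three_mul (hy : 0 < y) :
    thetaThree y * thetaThree (3 * y) =
      thetaFour y * thetaFour (3 * y) + thetaTwo y * thetaTwo (3 * y) := by
  have hnome : nome (3 * y) = nome y ^ 3 := mod_cast nome_natCast_mul 3 y
  have hprefactor :
      Real.exp (-(Real.pi * y / 4)) * Real.exp (-(Real.pi * (3 * y) / 4)) = nome y := by
    rw [← Real.exp_add, nome]
    ring_nf
  have hcubic := squareTheta_mul_squareTheta_cube_eq_add (nome_pos y).ne' (norm_nome_lt_one hy)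
  rw [← hnome] at hcubic
  rw [thetaThree, thetaThree, thetaFour, thetaFour, thetaTwo, thetaTwo, mul_mul_mul_comm,
    hprefactor, hcubic]

lemma weberF_pow_six_mul (hy : 0 < y) :
    weberF y ^ 6 * (thetaTwo y * thetaFour y) = 2 * thetaThree y ^ 2 := by
  have hprefactor : Real.exp (Real.pi * y / 24) ^ 6 * Real.exp (-(Real.pi * y / 4)) = 1 := by
    rw [← Real.exp_nat_mul, ← Real.exp_add, Real.exp_eq_one_iff]
    push_cast
    ring
  have hproduct := qPochhammer_pow_six_mul_squareTheta_neg_mul_pronicTheta (nome_pos y).ne'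
    (norm_nome_lt_one hy)
  rw [weberF, thetaTwo, thetaFour, thetaThree, ← hproduct]
  linear_combination (qPochhammer (-nome y) (nome y ^ 2) ^ 6 *
    (squareTheta (-nome y) * pronicTheta (nome y))) * hprefactor

lemma abs_neg_nome_lt_one (hy : 0 < y) : |-nome y| < 1 := by
  rw [abs_neg]
  exact norm_nome_lt_one hy

lemma abs_nome_sq_lt_one (hy : 0 < y) : |nome y ^ 2| < 1 :=
  norm_pow_lt_one_of_norm_lt_one (norm_nome_lt_one hy) two_ne_zero

lemma weberF_pos (hy : 0 < y) : 0 < weberF y :=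
  mul_pos (Real.exp_pos _) (qPochhammer_pos (abs_neg_nome_lt_one hy) (abs_nome_sq_lt_one hy))

lemma log_weberF (hy : 0 < y) :
    Real.log (weberF y) =
      Real.pi * y / 24 + Real.log (qPochhammer (-nome y) (nome y ^ 2)) := by
  rw [weberF, Real.log_mul (Real.exp_pos _).ne'
    (qPochhammer_pos (abs_neg_nome_lt_one hy) (abs_nome_sq_lt_one hy)).ne', Real.log_exp]

lemma thetaThree_pos (hy : 0 < y) : 0 < thetaThree y :=
  (summable_norm_zpow_sq (nome_pos y).ne' (norm_nome_lt_one hy)).of_norm.tsum_pos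
    (fun _ => (zpow_pos (nome_pos y) _).le) 0 (zpow_pos (nome_pos y) _)

lemma thetaTwo_pos (hy : 0 < y) : 0 < thetaTwo y :=
  mul_pos (Real.exp_pos _) <|
    (summable_norm_zpow_sq_add_self (nome_pos y).ne' (norm_nome_lt_one hy)).of_norm.tsum_pos
      (fun _ => (zpow_pos (nome_pos y) _).le) 0 (zpow_pos (nome_pos y) _)

lemma thetaFour_eq_inv_sqrt_mul_thetaTwo_inv (hy : 0 < y) :
    thetaFour y = (√y)⁻¹ * thetaTwo y⁻¹ := by
  have hpoisson := Complex.tsum_exp_neg_quadratic (a := y) (by simpa using hy) (Complex.I / 2)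
  have hfour : ∀ n : ℤ, Complex.exp (-Real.pi * y * n ^ 2 + 2 * Real.pi * (Complex.I / 2) * n) =
      ((-nome y) ^ (n ^ 2) : ℝ) := fun n => by
    have hsign : Complex.exp (2 * Real.pi * (Complex.I / 2) * n) = (-1) ^ (n ^ 2) := by
      rw [show 2 * Real.pi * (Complex.I / 2) * n = n * (Real.pi * Complex.I) by ring,
        Complex.exp_int_mul, Complex.exp_pi_mul_I]
      simp only [neg_one_zpow_eq_ite, Int.even_pow' two_ne_zero]
    rw [Complex.exp_add, hsign, ← neg_one_mul (nome y), mul_zpow, nome]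
    push_cast
    rw [← Complex.exp_int_mul, mul_comm]
    push_cast
    ring_nf
  have htwo : ∀ n : ℤ, Complex.exp (-Real.pi / y * (n + Complex.I * (Complex.I / 2)) ^ 2) =
      (Real.exp (-(Real.pi * y⁻¹ / 4)) * nome y⁻¹ ^ ((-n) ^ 2 + -n) : ℝ) := fun n => by
    rw [← mul_div_assoc, Complex.I_mul_I, nome]
    push_cast
    rw [← Complex.exp_int_mul, ← Complex.exp_add]
    push_cast
    ring_nf
  have hsqrt : (1 : ℂ) / (y : ℂ) ^ (1 / 2 : ℂ) = ((√y)⁻¹ : ℝ) := by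
    rw [Real.sqrt_eq_rpow, Complex.ofReal_inv, Complex.ofReal_cpow hy.le]
    simp
  rw [tsum_congr hfour, tsum_congr htwo, hsqrt, ← Complex.ofReal_tsum, ← Complex.ofReal_tsum,
    ← Complex.ofReal_mul, Complex.ofReal_inj, tsum_mul_left] at hpoisson
  rw [thetaFour, squareTheta, thetaTwo, pronicTheta, hpoisson]
  congr 2
  exact (Equiv.neg ℤ).tsum_eq fun n => nome y⁻¹ ^ (n ^ 2 + n)

lemma thetaFour_pos (hy : 0 < y) : 0 < thetaFour y := by
  rw [thetaFour_eq_inv_sqrt_mul_thetaTwo_inv hy]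
  exact mul_pos (inv_pos.2 (Real.sqrt_pos.2 hy)) (thetaTwo_pos (inv_pos.2 hy))

lemma thetaTwo_one : thetaTwo 1 = thetaFour 1 := by
  simpa using (thetaFour_eq_inv_sqrt_mul_thetaTwo_inv one_pos).symm

end ThetaConstants

section SingularValues

lemma thetaThree_one_div_thetaFour_one_pow_four : (thetaThree 1 / thetaFour 1) ^ 4 = 2 := by
  have hpos := thetaFour_pos one_pos
  rw [div_pow, thetaThree_pow_four one_pos, thetaTwo_one]
  field_simp
  norm_num

lemma thetaThree_one_div_thetaFour_one_sq : (thetaThree 1 / thetaFour 1) ^ 2 = √2 := by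
  rw [← thetaThree_one_div_thetaFour_one_pow_four, show 4 = 2 * 2 by rfl, pow_mul,
    Real.sqrt_sq (sq_nonneg _)]

lemma weberF_one_pow_six : weberF 1 ^ 6 = 2 * √2 := by
  have hpos := thetaFour_pos one_pos
  have hweber := weberF_pow_six_mul one_pos
  rw [thetaTwo_one] at hweber
  rw [← thetaThree_one_div_thetaFour_one_sq]
  field_simp
  linear_combination hweber

/-- The bound `4vw ≤ (v + w)²` selects the smaller root of a quadratic equation for `vw`. -/
lemma mul_eq_of_add_sq_eq_sqrt_two {v w : ℝ} (hquartic : v ^ 4 + w ^ 4 = 1)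
    (hsum : (v + w) ^ 2 = √2) : v * w = √2 * (2 - √3) / 2 := by
  have htwo : √2 ^ 2 = 2 := Real.sq_sqrt zero_le_two
  have hthree : √3 ^ 2 = 3 := Real.sq_sqrt zero_le_three
  have hquadratic : 2 * (v * w) ^ 2 - 4 * √2 * (v * w) + 1 = 0 := by
    rw [← hsum] at htwo ⊢
    linear_combination hquartic - htwo
  have hroots : (v * w - √2 * (2 - √3) / 2) * (v * w - √2 * (2 + √3) / 2) = 0 := by
    linear_combination hquadratic / 2 + (1 - √3 ^ 2 / 4) * htwo - hthree / 2
  have hsmall : v * w ≤ √2 / 4 := by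
    rw [← hsum]
    linear_combination sq_nonneg (v - w) / 4
  refine sub_eq_zero.1 ((mul_eq_zero.1 hroots).resolve_right (sub_neg.2 ?_).ne)
  have : 0 < √2 * (3 / 4 + √3 / 2) := by positivity
  linarith

lemma thetaTwo_three_mul_thetaFour_three :
    thetaTwo 3 * thetaFour 3 = √2 * (2 - √3) / 2 * thetaThree 3 ^ 2 := by
  have hthree := thetaThree_pos three_pos
  have hfour := thetaFour_pos one_pos
  have hquartic : (thetaTwo 3 / thetaThree 3) ^ 4 + (thetaFour 3 / thetaThree 3) ^ 4 = 1 := by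
    have := thetaThree_pow_four three_pos
    field_simp
    linear_combination -this
  have hcubic : thetaTwo 3 / thetaThree 3 + thetaFour 3 / thetaThree 3 =
      thetaThree 1 / thetaFour 1 := by
    have := thetaThree_mul_thetaThree_three_mul one_pos
    rw [thetaTwo_one, mul_one] at this
    field_simp
    linear_combination -this
  have hproduct := mul_eq_of_add_sq_eq_sqrt_two hquartic
    (by rw [hcubic, thetaThree_one_div_thetaFour_one_sq])
  rw [← hproduct]
  field_simp

lemma weberF_three_pow_six : weberF 3 ^ 6 = 2 * √2 * (2 + √3) := by
  have hweber := weberF_pow_six_mul three_pos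
  rw [thetaTwo_three_mul_thetaFour_three] at hweber
  have htwo : √2 ^ 2 = 2 := Real.sq_sqrt zero_le_two
  have hthree : √3 ^ 2 = 3 := Real.sq_sqrt zero_le_three
  have hcancel : weberF 3 ^ 6 * (√2 * (2 - √3) / 2) = 2 :=
    mul_right_cancel₀ (pow_pos (thetaThree_pos three_pos) 2).ne' (by linear_combination hweber)
  linear_combination √2 * (2 + √3) * hcancel - weberF 3 ^ 6 * (4 - √3 ^ 2) / 2 * htwo +
    weberF 3 ^ 6 * hthree

lemma log_weberF_one_sub_log_weberF_three_div_three :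
    Real.log (weberF 1) - Real.log (weberF 3) / 3 = 1 / 9 * Real.log (2 * (√3 - 1)) := by
  have htwo : √2 ^ 2 = 2 := Real.sq_sqrt zero_le_two
  have hthree : √3 ^ 2 = 3 := Real.sq_sqrt zero_le_three
  have hpowers : weberF 1 ^ 18 = weberF 3 ^ 6 * (2 * (√3 - 1)) ^ 2 := by
    rw [show 18 = 6 * 3 by rfl, pow_mul, weberF_one_pow_six, weberF_three_pow_six]
    linear_combination 8 * √2 * htwo - 8 * √2 * √3 * hthree
  have hpos : 0 < 2 * (√3 - 1) :=
    mul_pos two_pos (sub_pos.2 ((Real.lt_sqrt zero_le_one).2 (by norm_num)))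
  have hlog := congrArg Real.log hpowers
  rw [Real.log_mul (pow_pos (weberF_pos three_pos) 6).ne' (pow_pos hpos 2).ne', Real.log_pow,
    Real.log_pow, Real.log_pow] at hlog
  push_cast at hlog
  linarith

end SingularValues

section SumsOverIntegers

lemma hasSum_int_of_even {𝕜 : Type*} [NormedField 𝕜] {f : ℤ → 𝕜} {s : 𝕜}
    (heven : ∀ k, f (-k) = f k) (hf : HasSum (fun n : ℕ => f (n + 1)) s) :
    HasSum f (f 0 + 2 * s) := by
  have hneg : HasSum (fun n : ℕ => f (-(n + 1))) s := by simpa only [heven] using hf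
  convert! hf.of_add_one_of_neg_add_one hneg using 1
  ring

lemma hasSum_neg_one_zpow_mul {𝕜 : Type*} [NormedField 𝕜] {f : ℤ → 𝕜} {total even : 𝕜}
    (hf : HasSum f total) (heven : HasSum (fun m => f (2 * m)) even) :
    HasSum (fun m => (-1) ^ m * f m) (2 * even - total) := by
  have hsupport : ∀ m ∉ Set.range fun k : ℤ => 2 * k, (if Even m then f m else 0) = 0 := by
    intro m hm
    refine if_neg fun ⟨k, hk⟩ => hm ⟨k, ?_⟩
    simp only [hk, two_mul]
  have hindicator : HasSum (fun m => if Even m then f m else 0) even := by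
    refine ((mul_right_injective₀ (two_ne_zero (α := ℤ))).hasSum_iff hsupport).1 ?_
    simpa only [Function.comp_def, even_two_mul, if_true] using heven
  have hterm : ∀ m : ℤ, (-1) ^ m * f m = 2 * (if Even m then f m else 0) - f m := fun m => by
    rw [neg_one_zpow_eq_ite]
    split_ifs <;> ring
  simpa only [hterm] using (hindicator.mul_left 2).sub hf

lemma bijective_sumElim_three_mul :
    Function.Bijective (Sum.elim (fun m : ℤ => 3 * m)
      (Sum.elim (fun m : ℤ => 3 * m + 1) fun m : ℤ => -(3 * m + 1))) := by
  constructor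
  · rintro (a | a | a) (b | b | b) h <;>
      simp only [Sum.elim_inl, Sum.elim_inr, Sum.inl.injEq, Sum.inr.injEq] at h ⊢ <;> lia
  · intro m
    obtain h | h | h : m % 3 = 0 ∨ m % 3 = 1 ∨ m % 3 = 2 := by lia
    · exact ⟨.inl (m / 3), by simp only [Sum.elim_inl]; lia⟩
    · exact ⟨.inr (.inl (m / 3)), by simp only [Sum.elim_inl, Sum.elim_inr]; lia⟩
    · exact ⟨.inr (.inr (-1 - m / 3)), by simp only [Sum.elim_inr]; lia⟩

lemma hasSum_three_mul_add_one_of_even {𝕜 : Type*} [NormedField 𝕜] [CompleteSpace 𝕜] [CharZero 𝕜]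
    {f : ℤ → 𝕜} {total threes : 𝕜} (heven : ∀ k, f (-k) = f k) (hf : HasSum f total)
    (hthrees : HasSum (fun k => f (3 * k)) threes) :
    HasSum (fun k => f (3 * k + 1)) ((total - threes) / 2) := by
  have hones : Summable fun k => f (3 * k + 1) :=
    hf.summable.comp_injective (i := fun k : ℤ => 3 * k + 1) fun k l h => by lia
  have htwos : HasSum (fun k => f (-(3 * k + 1))) (∑' k, f (3 * k + 1)) := by
    simpa only [heven] using hones.hasSum
  let e := Equiv.ofBijective _ bijective_sumElim_three_mul
  have hsplit := e.hasSum_iff.1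
    (HasSum.sum (f := f ∘ e) hthrees (HasSum.sum (f := (f ∘ e) ∘ Sum.inr) hones.hasSum htwos))
  convert hones.hasSum using 1
  rw [hf.unique hsplit]
  ring

end SumsOverIntegers

section AlternatingCosech

/-- The summand `(-1)^k / (k sinh(πky))`, which is even in `k`. At `k = 0` division by zero makes it
`0`, so that its sum over `ℤ` is the sum over `k ≠ 0`. -/
noncomputable def altCosechTerm (y : ℝ) (k : ℤ) : ℝ :=
  (-1) ^ k / (k * Real.sinh (Real.pi * (k * y)))

lemma altCosechTerm_neg (y : ℝ) (k : ℤ) : altCosechTerm y (-k) = altCosechTerm y k := by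
  rw [altCosechTerm, altCosechTerm, zpow_neg, ← inv_zpow, inv_neg_one, Int.cast_neg,
    neg_mul (k : ℝ) y, mul_neg, Real.sinh_neg, neg_mul_neg]

lemma altCosechTerm_three_mul (y : ℝ) (k : ℤ) :
    altCosechTerm y (3 * k) = 1 / 3 * altCosechTerm (3 * y) k := by
  rw [altCosechTerm, altCosechTerm, zpow_mul, Odd.neg_one_zpow (by decide), Int.cast_mul,
    show ((3 : ℤ) : ℝ) * k * y = k * (3 * y) by push_cast; ring]
  push_cast
  ring

lemma sinh_pi_mul_eq_nome (y : ℝ) : Real.sinh (Real.pi * y) = ((nome y)⁻¹ - nome y) / 2 := by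
  rw [Real.sinh_eq, nome, ← Real.exp_neg, neg_neg]

lemma altCosechTerm_natCast_add_one (y : ℝ) (n : ℕ) :
    altCosechTerm y (n + 1) =
      2 * ((-nome y) ^ (n + 1) / (((n : ℝ) + 1) * (1 - (nome y ^ 2) ^ (n + 1)))) := by
  have hpow : nome ((n + 1) * y) = nome y ^ (n + 1) := mod_cast nome_natCast_mul (n + 1) y
  have hsinh : (nome y ^ (n + 1))⁻¹ - nome y ^ (n + 1) =
      (1 - (nome y ^ 2) ^ (n + 1)) / nome y ^ (n + 1) := by
    have := (nome_pos y).ne'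
    field_simp
    ring
  have hsign : (-1 : ℝ) ^ ((n : ℤ) + 1) = (-1) ^ (n + 1) := mod_cast zpow_natCast (-1 : ℝ) (n + 1)
  rw [altCosechTerm, hsign, neg_pow (nome y)]
  push_cast
  rw [sinh_pi_mul_eq_nome, hpow, hsinh]
  field_simp

lemma hasSum_altCosechTerm {y : ℝ} (hy : 0 < y) :
    HasSum (altCosechTerm y) (Real.pi * y / 6 - 4 * Real.log (weberF y)) := by
  have hlambert := hasSum_pow_div_one_sub_pow (abs_neg_nome_lt_one hy) (abs_nome_sq_lt_one hy)
  have hpos : HasSum (fun n : ℕ => altCosechTerm y (n + 1))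
      (2 * -Real.log (qPochhammer (-nome y) (nome y ^ 2))) := by
    simpa only [altCosechTerm_natCast_add_one y] using hlambert.mul_left 2
  convert! hasSum_int_of_even (altCosechTerm_neg y) hpos using 1
  rw [log_weberF hy, altCosechTerm, Int.cast_zero, zero_mul, div_zero]
  ring

end AlternatingCosech

section PartialFractions

variable {a : ℝ}

lemma sinh_pi_mul_ne_zero (ha : a ≠ 0) : Real.sinh (Real.pi * a) ≠ 0 :=
  Real.sinh_ne_zero.2 (mul_ne_zero Real.pi_ne_zero ha)

lemma ofReal_mul_I_mem_integerComplement (ha : a ≠ 0) :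
    (a * Complex.I : ℂ) ∈ Complex.integerComplement := by
  rintro ⟨n, hn⟩
  exact ha (by simpa using (congrArg Complex.im hn).symm)

lemma I_div_mul_cotTerm (ha : a ≠ 0) (n : ℕ) :
    Complex.I / (2 * a) * cotTerm (a * Complex.I) n = (1 / (((n : ℝ) + 1) ^ 2 + a ^ 2) : ℝ) := by
  have hfactor : (a * Complex.I + (n + 1)) * (a * Complex.I - (n + 1)) =
      -((((n : ℝ) + 1) ^ 2 + a ^ 2 : ℝ) : ℂ) := by
    push_cast
    linear_combination (a : ℂ) ^ 2 * Complex.I_sq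
  have hdenom : ((((n : ℝ) + 1) ^ 2 + a ^ 2 : ℝ) : ℂ) ≠ 0 :=
    Complex.ofReal_ne_zero.2 (by positivity)
  rw [cotTerm_identity (ofReal_mul_I_mem_integerComplement ha), hfactor, Complex.ofReal_div,
    Complex.ofReal_one]
  have haC := Complex.ofReal_ne_zero.2 ha
  field_simp
  linear_combination -Complex.I_sq

lemma I_div_mul_cot (ha : a ≠ 0) :
    Complex.I / (2 * a) *
        (Real.pi * Complex.cot (Real.pi * (a * Complex.I)) - 1 / (a * Complex.I)) =
      (Real.pi * Real.cosh (Real.pi * a) / (2 * a * Real.sinh (Real.pi * a)) -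
        1 / (2 * a ^ 2) : ℝ) := by
  have haC := Complex.ofReal_ne_zero.2 ha
  rw [Complex.cot, ← mul_assoc, Complex.cos_mul_I, Complex.sin_mul_I]
  push_cast
  field_simp [Complex.I_ne_zero]

lemma hasSum_one_div_natCast_add_one_sq_add_sq (ha : a ≠ 0) :
    HasSum (fun n : ℕ => 1 / (((n : ℝ) + 1) ^ 2 + a ^ 2))
      (Real.pi * Real.cosh (Real.pi * a) / (2 * a * Real.sinh (Real.pi * a)) -
        1 / (2 * a ^ 2)) := by
  have hz := ofReal_mul_I_mem_integerComplement ha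
  have hcot := (summable_cotTerm hz).hasSum.mul_left (Complex.I / (2 * a))
  rw [show ∑' n, cotTerm (a * Complex.I) n = _ from (cot_series_rep' hz).symm,
    I_div_mul_cot ha] at hcot
  simp only [I_div_mul_cotTerm ha] at hcot
  exact Complex.hasSum_ofReal.1 hcot

lemma hasSum_one_div_intCast_sq_add_sq (ha : a ≠ 0) :
    HasSum (fun m : ℤ => 1 / ((m : ℝ) ^ 2 + a ^ 2))
      (Real.pi * Real.cosh (Real.pi * a) / (a * Real.sinh (Real.pi * a))) := by
  have hpos := hasSum_one_div_natCast_add_one_sq_add_sq ha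
  convert! hasSum_int_of_even (f := fun m : ℤ => 1 / ((m : ℝ) ^ 2 + a ^ 2))
    (fun m => by rw [Int.cast_neg, neg_sq]) (by simpa using hpos) using 1
  have := sinh_pi_mul_ne_zero ha
  field_simp
  push_cast
  ring

lemma two_mul_coth_half_sub_coth (ha : a ≠ 0) :
    2 * (1 / 4 * (Real.pi * Real.cosh (Real.pi * (a / 2)) /
        (a / 2 * Real.sinh (Real.pi * (a / 2))))) -
      Real.pi * Real.cosh (Real.pi * a) / (a * Real.sinh (Real.pi * a)) =
      Real.pi / (a * Real.sinh (Real.pi * a)) := by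
  have hsinh := sinh_pi_mul_ne_zero (div_ne_zero ha two_ne_zero)
  have hcosh := (Real.cosh_pos (Real.pi * (a / 2))).ne'
  rw [show Real.pi * a = 2 * (Real.pi * (a / 2)) by ring, Real.sinh_two_mul, Real.cosh_two_mul]
  generalize Real.pi * (a / 2) = x at *
  field_simp
  linear_combination 4 * Real.cosh_sq x

lemma hasSum_neg_one_zpow_div_intCast_sq_add_sq (ha : a ≠ 0) :
    HasSum (fun m : ℤ => (-1) ^ m / ((m : ℝ) ^ 2 + a ^ 2))
      (Real.pi / (a * Real.sinh (Real.pi * a))) := by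
  have hscale : ∀ m : ℤ, 1 / (((2 * m : ℤ) : ℝ) ^ 2 + a ^ 2) =
      1 / 4 * (1 / ((m : ℝ) ^ 2 + (a / 2) ^ 2)) := fun m => by
    rw [one_div_mul_one_div]
    push_cast
    ring_nf
  have heven := (hasSum_one_div_intCast_sq_add_sq (div_ne_zero ha two_ne_zero)).mul_left (1 / 4)
  simp only [← hscale] at heven
  have halternating := hasSum_neg_one_zpow_mul (hasSum_one_div_intCast_sq_add_sq ha) heven
  rw [two_mul_coth_half_sub_coth ha] at halternating
  simpa only [mul_one_div] using halternating

end PartialFractions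

lemma tsum_neg_one_zpow_add_div (n : ℤ) {y : ℝ} (hy : y ≠ 0) :
    ∑' m : ℤ, (-1 : ℝ) ^ (m + n) / ((m : ℝ) ^ 2 + (y * (3 * n + 1)) ^ 2) =
      -(Real.pi / y) * altCosechTerm y (3 * n + 1) := by
  have hne : 3 * (n : ℝ) + 1 ≠ 0 := mod_cast (by lia : 3 * n + 1 ≠ 0)
  have hsum := (hasSum_neg_one_zpow_div_intCast_sq_add_sq
    (mul_ne_zero hy hne)).mul_left ((-1) ^ n)
  have hterm : ∀ m : ℤ, (-1 : ℝ) ^ (m + n) / ((m : ℝ) ^ 2 + (y * (3 * n + 1)) ^ 2) =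
      (-1) ^ n * ((-1) ^ m / ((m : ℝ) ^ 2 + (y * (3 * n + 1)) ^ 2)) := fun m => by
    rw [zpow_add₀ (by norm_num)]
    ring
  rw [tsum_congr hterm, hsum.tsum_eq, altCosechTerm, zpow_add₀ (by norm_num), zpow_mul,
    (by decide : Odd (3 : ℤ)).neg_one_zpow, mul_comm y]
  push_cast
  field_simp

theorem hasSum_tsum_neg_one_zpow_add_div {y : ℝ} (hy : 0 < y) :
    HasSum (fun n : ℤ => ∑' m : ℤ, (-1 : ℝ) ^ (m + n) / ((m : ℝ) ^ 2 + (y * (3 * n + 1)) ^ 2))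
      (2 * Real.pi / y * (Real.log (weberF y) - Real.log (weberF (3 * y)) / 3)) := by
  have hthrees := (hasSum_altCosechTerm (mul_pos three_pos hy)).mul_left (1 / 3)
  simp only [← altCosechTerm_three_mul] at hthrees
  have hones := hasSum_three_mul_add_one_of_even (altCosechTerm_neg y) (hasSum_altCosechTerm hy)
    hthrees
  simp only [tsum_neg_one_zpow_add_div _ hy.ne']
  convert! hones.mul_left (-(Real.pi / y)) using 1
  ring

/-- `∑∑ (-1)^{m+n}/(m² + (3n+1)²) = (2π/9) log(2(√3 - 1))`. -/
theorem F31_at_one :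
    Tendsto (fun N : ℕ => ∑ n ∈ Finset.Ioo (-(N : ℤ)) (N : ℤ),
        ∑' m : ℤ, (-1 : ℝ) ^ (m + n) / ((m : ℝ) ^ 2 + (3 * (n : ℝ) + 1) ^ 2))
      atTop
      (nhds (2 * Real.pi / 9 * Real.log (2 * (Real.sqrt 3 - 1)))) := by
  have hsum := hasSum_tsum_neg_one_zpow_add_div one_pos
  simp only [one_mul, mul_one, div_one, log_weberF_one_sub_log_weberF_three_div_three] at hsum
  rw [← mul_assoc, mul_one_div] at hsum
  rw [HasSum, SummationFilter.unconditional_filter] at hsum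
  exact hsum.comp (Finset.tendsto_Ioo_neg_atTop_atTop.comp tendsto_natCast_atTop_atTop)
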